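/- Assume Assumption 1 holds and fix m ∈ (−1,1). For every deterministic c ∈ (0,γ) there exists a unique ã ∈ (0,ς) such that G*(ã) = c, and a unique λ̃ ∈ (0,∞) such that G'(λ̃) = ã. -/

import Mathlib

open MeasureTheory Real Filter Set
open scoped ENNReal Topology BigOperators

noncomputable section

/-- Assumption 1 of the paper, phrased for the law `μ` of `h₁`: `μ` has an absolutely
continuous part, small balls around `0` have linearly bounded mass, the density is
bounded below on some interval, and the first three (absolute) moments are finite. -/
structure Assumption1 (μ : Measure ℝ) : Prop where
  isProb : IsProbabilityMeasure μ
  acPart : ¬ μ.MutuallySingular (volume : Measure ℝ)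
  smallBall : ∃ ε > (0:ℝ), ∃ p₁ > (0:ℝ), ∀ t ∈ Set.Ico (0:ℝ) ε,
    (μ {x : ℝ | |x| < t}).toReal ≤ p₁ * t
  densityLB : ∃ c d p₂ : ℝ, c < d ∧ 0 < p₂ ∧
    ∀ s : Set ℝ, s ⊆ Set.Icc c d → MeasurableSet s →
      ENNReal.ofReal p₂ * volume s ≤ μ s
  intAbs : Integrable (fun x : ℝ => |x|) μ
  intSq : Integrable (fun x : ℝ => x ^ 2) μ
  intCube : Integrable (fun x : ℝ => |x| ^ 3) μ

/-- `g(λ) = log(((1+m)/2)e^{λ(1−m)} + ((1−m)/2)e^{−λ(1+m)})`. -/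
def gfun (m lam : ℝ) : ℝ :=
  Real.log ((1 + m) / 2 * Real.exp (lam * (1 - m)) + (1 - m) / 2 * Real.exp (-(lam * (1 + m))))

/-- `G(λ) = E[g(λ h₁)] = E[log((1+m)e^{λ(1−m)h₁} + (1−m)e^{−λ(1+m)h₁})] − log 2`. -/
def Gf (μ : Measure ℝ) (m lam : ℝ) : ℝ := ∫ x, gfun m (lam * x) ∂μ

/-- `G*(a) = sup_{λ∈ℝ}(λa − G(λ))`. -/
def Gstar (μ : Measure ℝ) (m a : ℝ) : ℝ := ⨆ lam : ℝ, (lam * a - Gf μ m lam)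

/-- `ς = −m ψ₁ + ψ₃`. -/
def sigmaBar (μ : Measure ℝ) (m : ℝ) : ℝ := -m * ∫ x, x ∂μ + ∫ x, |x| ∂μ

/-- `γ = −E[log(1 + sign(h₁)m)] + log 2`. -/
def gammaBar (μ : Measure ℝ) (m : ℝ) : ℝ :=
  -(∫ x, Real.log (1 + Real.sign x * m) ∂μ) + Real.log 2

/-! The function `G` is strictly convex with `G 0 = G' 0 = 0`, so the supremum defining `G*` is
attained at the point of slope `a`: `G* (G' λ) = λ G' λ - G λ`. On `(0, ∞)` both `G'` and
`λ ↦ λ G' λ - G λ` are continuous and strictly increasing from `0`, and dominated convergence gives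
their limits `ς` and `γ` at infinity. Hence `G'` maps `(0, ∞)` bijectively onto `(0, ς)`, and `G*`
maps `(0, ς)` bijectively onto `(0, γ)`. -/

section General

lemma bijOn_Ioi_Ioo_of_tendsto_atTop {α β : Type*}
    [ConditionallyCompleteLinearOrder α] [DenselyOrdered α] [NoMaxOrder α]
    [TopologicalSpace α] [OrderTopology α]
    [LinearOrder β] [TopologicalSpace β] [OrderClosedTopology β]
    {f : α → β} {a : α} {L : β} (hmono : StrictMonoOn f (Ici a)) (hcont : ContinuousOn f (Ici a))
    (hlim : Tendsto f atTop (𝓝 L)) : BijOn f (Ioi a) (Ioo (f a) L) := by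
  refine ⟨fun x hx ↦ ⟨hmono self_mem_Ici (mem_Ici_of_Ioi hx) hx, ?_⟩,
    (hmono.mono Ioi_subset_Ici_self).injOn, fun b hb ↦ ?_⟩
  · obtain ⟨y, hxy⟩ := exists_gt x
    have hay : a < y := lt_trans hx hxy
    calc f x < f y := hmono (mem_Ici_of_Ioi hx) hay.le hxy
      _ ≤ L := ge_of_tendsto hlim <| (eventually_ge_atTop y).mono fun z hyz ↦
        hmono.monotoneOn hay.le (hay.le.trans hyz) hyz
  · obtain ⟨M, hbM, haM⟩ :=
      ((hlim.eventually_const_lt hb.2).and (eventually_gt_atTop a)).exists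
    obtain ⟨x, hx, hfx⟩ :=
      intermediate_value_Ioo haM.le (hcont.mono Icc_subset_Ici_self) ⟨hb.1, hbM⟩
    exact ⟨x, hx.1, hfx⟩

lemma existsUnique_mem_of_bijOn {α β : Type*} {f : α → β} {s : Set α} {t : Set β} {b : β}
    (hf : BijOn f s t) (hb : b ∈ t) : ∃! a, a ∈ s ∧ f a = b := by
  obtain ⟨a, ha, rfl⟩ := hf.surjOn hb
  exact ⟨a, ⟨ha, rfl⟩, fun a' ha' ↦ hf.injOn ha'.1 ha ha'.2⟩

lemma isBounded_range_of_tendsto_atBot_atTop {α β : Type*}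
    [LinearOrder α] [NoMaxOrder α] [NoMinOrder α] [TopologicalSpace α] [OrderClosedTopology α]
    [CompactIccSpace α] [PseudoMetricSpace β] {f : α → β} {a b : β} (hf : Continuous f)
    (hbot : Tendsto f atBot (𝓝 a)) (htop : Tendsto f atTop (𝓝 b)) :
    Bornology.IsBounded (range f) := by
  obtain ⟨s, hs, hfs⟩ := Metric.exists_isBounded_image_of_tendsto hbot
  obtain ⟨t, ht, hft⟩ := Metric.exists_isBounded_image_of_tendsto htop
  have hst : s ∪ t ∈ cocompact α := by
    rw [cocompact_eq_atBot_atTop]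
    exact union_mem_sup hs ht
  obtain ⟨K, hK, hKst⟩ := mem_cocompact.1 hst
  refine ((hfs.union hft).union (hK.image hf).isBounded).subset ?_
  rw [← image_union, ← image_union, ← image_univ]
  exact image_mono fun x _ ↦ or_iff_not_imp_right.2 fun hxK ↦ hKst hxK

lemma measure_singleton_eq_zero_of_measureReal_ball_le {α : Type*} [PseudoMetricSpace α]
    [MeasurableSpace α] {μ : Measure α} [IsFiniteMeasure μ] {x : α} {p : ℝ}
    (hball : ∀ᶠ t in 𝓝[>] 0, μ.real (Metric.ball x t) ≤ p * t) : μ {x} = 0 := by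
  have hle : ∀ᶠ t in 𝓝[>] 0, μ.real {x} ≤ p * t := by
    filter_upwards [hball, self_mem_nhdsWithin] with t hbt ht
    exact (measureReal_mono (singleton_subset_iff.2 (Metric.mem_ball_self ht))).trans hbt
  have hlim : Tendsto (fun t : ℝ ↦ p * t) (𝓝[>] 0) (𝓝 0) :=
    ((continuous_const_mul p).tendsto' 0 0 (mul_zero p)).mono_left nhdsWithin_le_nhds
  exact (measureReal_eq_zero_iff).1 (le_antisymm (ge_of_tendsto hlim hle) measureReal_nonneg)

end General

section Legendre

/-- The Legendre transform of a function on `ℝ`, with junk value `0` at those `a` for which the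
supremum is infinite. -/
def legendreTransform (f : ℝ → ℝ) (a : ℝ) : ℝ := ⨆ x : ℝ, (x * a - f x)

/-- The value `x f'(x) - f(x)` that the Legendre transform of a convex function `f` takes at the
slope `f'(x)`. It is also minus the intercept of the tangent to `f` at `x`. -/
def legendreAtDeriv (f : ℝ → ℝ) (x : ℝ) : ℝ := x * deriv f x - f x

lemma add_mul_sub_lt_of_strictConvexOn {S : Set ℝ} {f : ℝ → ℝ} {x y f' : ℝ}
    (hf : StrictConvexOn ℝ S f) (hx : x ∈ S) (hy : y ∈ S) (hxy : x ≠ y)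
    (hf' : HasDerivAt f f' x) : f x + f' * (y - x) < f y := by
  rcases hxy.lt_or_gt with hlt | hgt
  · have h := hf.lt_slope_of_hasDerivAt hx hy hlt hf'
    rw [slope_def_field, lt_div_iff₀ (sub_pos.2 hlt)] at h
    linarith
  · have h := hf.slope_lt_of_hasDerivAt hy hx hgt hf'
    rw [slope_def_field, div_lt_iff₀ (sub_pos.2 hgt)] at h
    linarith

lemma legendreAtDeriv_comp_neg (f : ℝ → ℝ) (x : ℝ) :
    legendreAtDeriv (fun y ↦ f (-y)) x = legendreAtDeriv f (-x) := by
  simp [legendreAtDeriv, deriv_comp_neg]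

lemma continuous_legendreAtDeriv {f : ℝ → ℝ} (hf : ContDiff ℝ 1 f) :
    Continuous (legendreAtDeriv f) :=
  (continuous_id.mul (hf.continuous_deriv le_rfl)).sub hf.continuous

variable {f : ℝ → ℝ} {s L : ℝ}

lemma add_deriv_mul_sub_lt (hf : Differentiable ℝ f) (hmono : StrictMono (deriv f)) {x y : ℝ}
    (hxy : x ≠ y) : f x + deriv f x * (y - x) < f y :=
  add_mul_sub_lt_of_strictConvexOn (hmono.strictConvexOn_univ_of_deriv hf.continuous)
    (mem_univ x) (mem_univ y) hxy (hf x).hasDerivAt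

lemma legendreTransform_deriv (hf : Differentiable ℝ f) (hmono : StrictMono (deriv f)) (x : ℝ) :
    legendreTransform f (deriv f x) = legendreAtDeriv f x := by
  have hle (y : ℝ) : y * deriv f x - f y ≤ legendreAtDeriv f x := by
    rcases eq_or_ne x y with rfl | hxy
    · rfl
    · have := add_deriv_mul_sub_lt hf hmono hxy
      unfold legendreAtDeriv
      linarith
  exact le_antisymm (ciSup_le hle)
    (le_ciSup (f := fun y ↦ y * deriv f x - f y) ⟨_, forall_mem_range.2 hle⟩ x)

lemma strictMonoOn_legendreAtDeriv (hf : Differentiable ℝ f) (hmono : StrictMono (deriv f)) :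
    StrictMonoOn (legendreAtDeriv f) (Ici 0) := by
  intro x hx y _ hxy
  calc x * deriv f x - f x ≤ x * deriv f y - f x := sub_le_sub_right
        (mul_le_mul_of_nonneg_left (hmono.monotone hxy.le) hx) _
    _ < y * deriv f y - f y := by linarith [add_deriv_mul_sub_lt hf hmono hxy.ne']

lemma bijOn_deriv_Ioi_Ioo (hf : ContDiff ℝ 1 f) (hmono : StrictMono (deriv f))
    (hs : Tendsto (deriv f) atTop (𝓝 s)) : BijOn (deriv f) (Ioi 0) (Ioo (deriv f 0) s) :=
  bijOn_Ioi_Ioo_of_tendsto_atTop (hmono.strictMonoOn _)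
    (hf.continuous_deriv le_rfl).continuousOn hs

lemma bijOn_legendreTransform (hf : ContDiff ℝ 1 f) (hmono : StrictMono (deriv f))
    (hs : Tendsto (deriv f) atTop (𝓝 s)) (hL : Tendsto (legendreAtDeriv f) atTop (𝓝 L)) :
    BijOn (legendreTransform f) (Ioo (deriv f 0) s) (Ioo (-f 0) L) := by
  have hdiff : Differentiable ℝ f := hf.differentiable one_ne_zero
  have hcomp : legendreTransform f ∘ deriv f = legendreAtDeriv f :=
    funext (legendreTransform_deriv hdiff hmono)
  have hzero : legendreAtDeriv f 0 = -f 0 := by simp [legendreAtDeriv]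
  rw [← (bijOn_deriv_Ioi_Ioo hf hmono hs).image_eq, ← bijOn_comp_iff hmono.injective.injOn, hcomp,
    ← hzero]
  exact bijOn_Ioi_Ioo_of_tendsto_atTop (strictMonoOn_legendreAtDeriv hdiff hmono)
    (continuous_legendreAtDeriv hf).continuousOn hL

end Legendre

section ScaledMean

/-- The expectation of `g(lam X)` for a random variable `X` of law `μ`, as a function of the scale
`lam`; `Gf μ m` is the case `g = gfun m`. -/
def scaledMean (μ : Measure ℝ) (g : ℝ → ℝ) (lam : ℝ) : ℝ := ∫ x, g (lam * x) ∂μ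

variable {μ : Measure ℝ} {g : ℝ → ℝ} {C : ℝ}

lemma tendsto_integral_mul_comp_mul_atTop {w F : ℝ → ℝ} {A B : ℝ} (hw : Integrable w μ)
    (hw₀ : ∀ᵐ x ∂μ, x = 0 → w x = 0) (hF : Continuous F)
    (hbot : Tendsto F atBot (𝓝 B)) (htop : Tendsto F atTop (𝓝 A)) :
    Tendsto (fun lam ↦ ∫ x, w x * F (lam * x) ∂μ) atTop
      (𝓝 (∫ x, w x * (if 0 < x then A else B) ∂μ)) := by
  obtain ⟨C, hC⟩ := (isBounded_range_of_tendsto_atBot_atTop hF hbot htop).exists_norm_le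
  refine tendsto_integral_filter_of_dominated_convergence (fun x ↦ ‖w x‖ * C)
    (.of_forall fun lam ↦ hw.1.mul (hF.comp (continuous_const_mul lam)).aestronglyMeasurable)
    (.of_forall fun lam ↦ .of_forall fun x ↦ ?_) (hw.norm.mul_const C) ?_
  · rw [norm_mul]
    gcongr
    exact hC _ (mem_range_self _)
  · filter_upwards [hw₀] with x hx₀
    rcases lt_trichotomy x 0 with hneg | hzero | hpos
    · rw [if_neg hneg.not_gt]
      exact (hbot.comp (tendsto_id.atTop_mul_const_of_neg hneg)).const_mul _
    · simp [hx₀ hzero]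
    · rw [if_pos hpos]
      exact (htop.comp (tendsto_id.atTop_mul_const hpos)).const_mul _

lemma integrable_mul_deriv_comp_mul (hg : ContDiff ℝ 1 g) (hC : ∀ u, |deriv g u| ≤ C)
    (hμ : Integrable (fun x ↦ x) μ) (lam : ℝ) :
    Integrable (fun x ↦ x * deriv g (lam * x)) μ :=
  hμ.mul_bdd (c := C)
    ((hg.continuous_deriv le_rfl).comp (continuous_const_mul lam)).aestronglyMeasurable
    (.of_forall fun x ↦ hC (lam * x))

lemma norm_mul_deriv_le (hC : ∀ u, |deriv g u| ≤ C) (x u : ℝ) : ‖x * deriv g u‖ ≤ |x| * C := by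
  rw [norm_mul]
  exact mul_le_mul_of_nonneg_left (hC u) (abs_nonneg x)

lemma strictMono_integral_mul_deriv_comp_mul (hg : ContDiff ℝ 1 g) (hC : ∀ u, |deriv g u| ≤ C)
    (hμ : Integrable (fun x ↦ x) μ) (hμ₀ : ¬ ∀ᵐ x ∂μ, x = 0) (hmono : StrictMono (deriv g)) :
    StrictMono fun lam ↦ ∫ x, x * deriv g (lam * x) ∂μ := by
  intro l l' hl
  have hlt (x : ℝ) (hx : x ≠ 0) : x * deriv g (l * x) < x * deriv g (l' * x) := by
    rcases hx.lt_or_gt with hneg | hpos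
    · exact mul_lt_mul_of_neg_left (hmono (mul_lt_mul_of_neg_right hl hneg)) hneg
    · exact mul_lt_mul_of_pos_left (hmono (mul_lt_mul_of_pos_right hl hpos)) hpos
  have hle (x : ℝ) : x * deriv g (l * x) ≤ x * deriv g (l' * x) := by
    rcases eq_or_ne x 0 with rfl | hx
    · simp
    · exact (hlt x hx).le
  have hint := integrable_mul_deriv_comp_mul hg hC hμ
  refine (integral_mono (hint l) (hint l') hle).lt_of_ne fun heq ↦ hμ₀ ?_
  filter_upwards [(integral_eq_iff_of_ae_le (hint l) (hint l') (.of_forall hle)).1 heq] with x hx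
  exact by_contra fun hx₀ ↦ (hlt x hx₀).ne hx

variable [IsFiniteMeasure μ]

lemma integrable_comp_mul (hg : ContDiff ℝ 1 g) (hC : ∀ u, |deriv g u| ≤ C)
    (hμ : Integrable (fun x ↦ x) μ) (lam : ℝ) : Integrable (fun x ↦ g (lam * x)) μ := by
  have hlin (u : ℝ) : ‖g u‖ ≤ ‖g 0‖ + C * |u| := by
    have hLip : ‖g u - g 0‖ ≤ C * ‖u - 0‖ :=
      convex_univ.norm_image_sub_le_of_norm_deriv_le
        (fun x _ ↦ hg.differentiable one_ne_zero x) (fun x _ ↦ hC x) (mem_univ 0) (mem_univ u)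
    rw [sub_zero, norm_eq_abs u] at hLip
    linarith [norm_sub_norm_le (g u) (g 0)]
  exact ((integrable_const ‖g 0‖).add ((hμ.const_mul lam).abs.const_mul C)).mono'
    (hg.continuous.comp (continuous_const_mul lam)).aestronglyMeasurable
    (.of_forall fun x ↦ hlin (lam * x))

lemma hasDerivAt_scaledMean (hg : ContDiff ℝ 1 g) (hC : ∀ u, |deriv g u| ≤ C)
    (hμ : Integrable (fun x ↦ x) μ) (lam : ℝ) :
    HasDerivAt (scaledMean μ g) (∫ x, x * deriv g (lam * x) ∂μ) lam := by
  refine (hasDerivAt_integral_of_dominated_loc_of_deriv_le univ_mem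
    (.of_forall fun l ↦ (integrable_comp_mul hg hC hμ l).aestronglyMeasurable)
    (integrable_comp_mul hg hC hμ lam)
    (integrable_mul_deriv_comp_mul hg hC hμ lam).aestronglyMeasurable
    (.of_forall fun x l _ ↦ norm_mul_deriv_le hC x (l * x)) (hμ.abs.mul_const C)
    (.of_forall fun x l _ ↦ ?_)).2
  rw [mul_comm]
  exact (hg.differentiable one_ne_zero (l * x)).hasDerivAt.comp l (hasDerivAt_mul_const x)

lemma deriv_scaledMean (hg : ContDiff ℝ 1 g) (hC : ∀ u, |deriv g u| ≤ C)
    (hμ : Integrable (fun x ↦ x) μ) :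
    deriv (scaledMean μ g) = fun lam ↦ ∫ x, x * deriv g (lam * x) ∂μ :=
  deriv_eq (hasDerivAt_scaledMean hg hC hμ)

lemma contDiff_one_scaledMean (hg : ContDiff ℝ 1 g) (hC : ∀ u, |deriv g u| ≤ C)
    (hμ : Integrable (fun x ↦ x) μ) : ContDiff ℝ 1 (scaledMean μ g) := by
  rw [contDiff_one_iff_deriv, deriv_scaledMean hg hC hμ]
  refine ⟨fun lam ↦ (hasDerivAt_scaledMean hg hC hμ lam).differentiableAt, ?_⟩
  have hg' : Continuous (deriv g) := hg.continuous_deriv le_rfl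
  exact continuous_of_dominated
    (fun l ↦ (integrable_mul_deriv_comp_mul hg hC hμ l).aestronglyMeasurable)
    (fun l ↦ .of_forall fun x ↦ norm_mul_deriv_le hC x (l * x)) (hμ.abs.mul_const C)
    (.of_forall fun x ↦ continuous_const.mul (hg'.comp (continuous_mul_const x)))

lemma legendreAtDeriv_scaledMean (hg : ContDiff ℝ 1 g) (hC : ∀ u, |deriv g u| ≤ C)
    (hμ : Integrable (fun x ↦ x) μ) (lam : ℝ) :
    legendreAtDeriv (scaledMean μ g) lam = ∫ x, legendreAtDeriv g (lam * x) ∂μ := by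
  rw [legendreAtDeriv, (hasDerivAt_scaledMean hg hC hμ lam).deriv, scaledMean, ← integral_const_mul,
    ← integral_sub ((integrable_mul_deriv_comp_mul hg hC hμ lam).const_mul lam)
      (integrable_comp_mul hg hC hμ lam)]
  simp only [legendreAtDeriv, mul_assoc]

end ScaledMean

section LogMoment

variable {m : ℝ}

lemma gfun_neg (m u : ℝ) : gfun m (-u) = gfun (-m) u := by
  unfold gfun
  rw [add_comm]
  ring_nf

lemma gfun_zero (m : ℝ) : gfun m 0 = 0 := by
  have h : (1 + m) / 2 + (1 - m) / 2 = 1 := by ring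
  simp [gfun, h]

lemma gfun_eq_mul_add_log (hm : m ∈ Ioo (-1 : ℝ) 1) (u : ℝ) :
    gfun m u = (1 - m) * u + log ((1 + m) / 2 + (1 - m) / 2 * exp (-(2 * u))) := by
  have hp : 0 < (1 + m) / 2 := by linarith [hm.1]
  have hq : 0 < (1 - m) / 2 := by linarith [hm.2]
  have hfactor : (1 + m) / 2 * exp (u * (1 - m)) + (1 - m) / 2 * exp (-(u * (1 + m)))
      = exp ((1 - m) * u) * ((1 + m) / 2 + (1 - m) / 2 * exp (-(2 * u))) := by
    have hexp : exp (-(u * (1 + m))) = exp ((1 - m) * u) * exp (-(2 * u)) := by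
      rw [← exp_add]
      ring_nf
    rw [hexp]
    ring_nf
  rw [gfun, hfactor, log_mul (exp_ne_zero _) (by positivity), log_exp]

lemma contDiff_gfun (hm : m ∈ Ioo (-1 : ℝ) 1) {n : WithTop ℕ∞} : ContDiff ℝ n (gfun m) := by
  have hp : 0 < (1 + m) / 2 := by linarith [hm.1]
  have hq : 0 < (1 - m) / 2 := by linarith [hm.2]
  unfold gfun
  exact ContDiff.log (by fun_prop) fun u ↦ by positivity

lemma deriv_gfun (hm : m ∈ Ioo (-1 : ℝ) 1) (u : ℝ) :
    deriv (gfun m) u = (1 - m) * (1 - 2 / ((1 + m) * exp (2 * u) + (1 - m))) := by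
  have hp : 0 < 1 + m := by linarith [hm.1]
  have hq : 0 < 1 - m := by linarith [hm.2]
  have hexp : HasDerivAt (fun u : ℝ ↦ exp (-(2 * u))) (exp (-(2 * u)) * -(2 * 1)) u :=
    ((hasDerivAt_id u).const_mul 2).fun_neg.exp
  have hlog := ((hexp.const_mul ((1 - m) / 2)).const_add ((1 + m) / 2)).log (by positivity)
  have hderiv := ((hasDerivAt_id u).const_mul (1 - m)).fun_add hlog
  rw [funext (gfun_eq_mul_add_log hm)]
  refine hderiv.deriv.trans ?_
  rw [exp_neg]
  field_simp
  ring

lemma deriv_gfun_zero (hm : m ∈ Ioo (-1 : ℝ) 1) : deriv (gfun m) 0 = 0 := by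
  rw [deriv_gfun hm, mul_zero, exp_zero]
  ring_nf

lemma strictMono_deriv_gfun (hm : m ∈ Ioo (-1 : ℝ) 1) : StrictMono (deriv (gfun m)) := by
  have hp : 0 < 1 + m := by linarith [hm.1]
  have hq : 0 < 1 - m := by linarith [hm.2]
  intro u v huv
  rw [deriv_gfun hm, deriv_gfun hm]
  gcongr

lemma tendsto_exp_neg_two_mul_atTop :
    Tendsto (fun u : ℝ ↦ exp (-(2 * u))) atTop (𝓝 0) :=
  tendsto_exp_neg_atTop_nhds_zero.comp (tendsto_id.const_mul_atTop two_pos)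

lemma tendsto_deriv_gfun_atTop (hm : m ∈ Ioo (-1 : ℝ) 1) :
    Tendsto (deriv (gfun m)) atTop (𝓝 (1 - m)) := by
  have hp : 0 < 1 + m := by linarith [hm.1]
  have hden : Tendsto (fun u : ℝ ↦ (1 + m) * exp (2 * u) + (1 - m)) atTop atTop :=
    tendsto_atTop_add_const_right _ _
      ((tendsto_exp_atTop.comp (tendsto_id.const_mul_atTop two_pos)).const_mul_atTop hp)
  rw [funext (deriv_gfun hm)]
  simpa using ((hden.const_div_atTop 2).const_sub 1).const_mul (1 - m)

lemma tendsto_deriv_gfun_atBot (hm : m ∈ Ioo (-1 : ℝ) 1) :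
    Tendsto (deriv (gfun m)) atBot (𝓝 (-(1 + m))) := by
  have hsymm (u : ℝ) : deriv (gfun m) u = -deriv (gfun (-m)) (-u) := by
    rw [← funext (gfun_neg m), deriv_comp_neg, neg_neg, neg_neg]
  rw [funext hsymm]
  simpa using ((tendsto_deriv_gfun_atTop ⟨neg_lt_neg hm.2, neg_lt.1 hm.1⟩).comp
    tendsto_neg_atBot_atTop).neg

lemma legendreAtDeriv_gfun (hm : m ∈ Ioo (-1 : ℝ) 1) (u : ℝ) :
    legendreAtDeriv (gfun m) u =
      -(1 - m) * ((2 * u) * exp (-(2 * u)) / ((1 + m) + (1 - m) * exp (-(2 * u))))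
        - log ((1 + m) / 2 + (1 - m) / 2 * exp (-(2 * u))) := by
  have hp : 0 < 1 + m := by linarith [hm.1]
  have hq : 0 < 1 - m := by linarith [hm.2]
  rw [legendreAtDeriv, deriv_gfun hm, gfun_eq_mul_add_log hm, exp_neg]
  field_simp
  ring

lemma tendsto_legendreAtDeriv_gfun_atTop (hm : m ∈ Ioo (-1 : ℝ) 1) :
    Tendsto (legendreAtDeriv (gfun m)) atTop (𝓝 (-log ((1 + m) / 2))) := by
  have hp : 0 < 1 + m := by linarith [hm.1]
  have hexp := tendsto_exp_neg_two_mul_atTop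
  have hnum : Tendsto (fun u : ℝ ↦ (2 * u) * exp (-(2 * u))) atTop (𝓝 0) := by
    simpa [Function.comp_def] using (tendsto_pow_mul_exp_neg_atTop_nhds_zero 1).comp
      (tendsto_id.const_mul_atTop (two_pos (α := ℝ)))
  have hfrac := hnum.div ((hexp.const_mul (1 - m)).const_add (1 + m)) (by simpa using hp.ne')
  have hlog := ((hexp.const_mul ((1 - m) / 2)).const_add ((1 + m) / 2)).log (by simpa using hp.ne')
  rw [funext (legendreAtDeriv_gfun hm)]
  simpa using (hfrac.const_mul (-(1 - m))).sub hlog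

lemma tendsto_legendreAtDeriv_gfun_atBot (hm : m ∈ Ioo (-1 : ℝ) 1) :
    Tendsto (legendreAtDeriv (gfun m)) atBot (𝓝 (-log ((1 - m) / 2))) := by
  have hsymm (u : ℝ) : legendreAtDeriv (gfun m) u = legendreAtDeriv (gfun (-m)) (-u) := by
    rw [← funext (gfun_neg m), legendreAtDeriv_comp_neg, neg_neg]
  rw [funext hsymm]
  exact (tendsto_legendreAtDeriv_gfun_atTop ⟨neg_lt_neg hm.2, neg_lt.1 hm.1⟩).comp
    tendsto_neg_atBot_atTop

lemma exists_abs_deriv_gfun_le (hm : m ∈ Ioo (-1 : ℝ) 1) : ∃ C, ∀ u, |deriv (gfun m) u| ≤ C := by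
  obtain ⟨C, hC⟩ := (isBounded_range_of_tendsto_atBot_atTop
    ((contDiff_gfun hm).continuous_deriv le_rfl) (tendsto_deriv_gfun_atBot hm)
    (tendsto_deriv_gfun_atTop hm)).exists_norm_le
  exact ⟨C, fun u ↦ hC _ (mem_range_self u)⟩

end LogMoment

section Mean

variable {μ : Measure ℝ} {m : ℝ}

lemma integral_mul_ite_eq_sigmaBar (hμ : Integrable (fun x ↦ x) μ) (m : ℝ) :
    ∫ x, x * (if 0 < x then 1 - m else -(1 + m)) ∂μ = sigmaBar μ m := by
  rw [sigmaBar, ← integral_const_mul, ← integral_add (hμ.const_mul (-m)) hμ.abs]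
  refine integral_congr_ae (.of_forall fun x ↦ ?_)
  dsimp only
  split_ifs with hx
  · rw [abs_of_pos hx]
    ring
  · rw [abs_of_nonpos (not_lt.1 hx)]
    ring

lemma integral_ite_eq_gammaBar [IsProbabilityMeasure μ] (hμ₀ : ∀ᵐ x ∂μ, x ≠ 0)
    (hm : m ∈ Ioo (-1 : ℝ) 1) :
    ∫ x, (if 0 < x then -log ((1 + m) / 2) else -log ((1 - m) / 2)) ∂μ = gammaBar μ m := by
  have hp : 0 < 1 + m := by linarith [hm.1]
  have hq : 0 < 1 - m := by linarith [hm.2]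
  have hint : Integrable
      (fun x ↦ if 0 < x then -log ((1 + m) / 2) else -log ((1 - m) / 2)) μ :=
    Integrable.piecewise (s := Ioi 0) measurableSet_Ioi integrableOn_const integrableOn_const
  have hsign : ∀ᵐ x ∂μ, log (1 + Real.sign x * m)
      = log 2 - (if 0 < x then -log ((1 + m) / 2) else -log ((1 - m) / 2)) := by
    filter_upwards [hμ₀] with x hx
    rcases hx.lt_or_gt with hneg | hpos
    · rw [Real.sign_of_neg hneg, if_neg hneg.not_gt, log_div hq.ne' two_ne_zero]
      ring_nf
    · rw [Real.sign_of_pos hpos, if_pos hpos, log_div hp.ne' two_ne_zero]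
      ring_nf
  rw [gammaBar, integral_congr_ae hsign, integral_sub (integrable_const _) hint]
  simp

lemma tendsto_legendreAtDeriv_Gf_atTop [IsProbabilityMeasure μ]
    (hμ : Integrable (fun x ↦ x) μ) (hμ₀ : ∀ᵐ x ∂μ, x ≠ 0) (hm : m ∈ Ioo (-1 : ℝ) 1) :
    Tendsto (legendreAtDeriv (Gf μ m)) atTop (𝓝 (gammaBar μ m)) := by
  obtain ⟨C, hC⟩ := exists_abs_deriv_gfun_le hm
  have hmean : legendreAtDeriv (Gf μ m) = fun lam ↦ ∫ x, legendreAtDeriv (gfun m) (lam * x) ∂μ :=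
    funext (legendreAtDeriv_scaledMean (contDiff_gfun hm) hC hμ)
  rw [hmean, ← integral_ite_eq_gammaBar hμ₀ hm]
  simpa only [one_mul] using tendsto_integral_mul_comp_mul_atTop (integrable_const (1 : ℝ))
    (hμ₀.mono fun _ hx hx₀ ↦ absurd hx₀ hx) (continuous_legendreAtDeriv (contDiff_gfun hm))
    (tendsto_legendreAtDeriv_gfun_atBot hm) (tendsto_legendreAtDeriv_gfun_atTop hm)

variable [IsFiniteMeasure μ]

lemma contDiff_one_Gf (hμ : Integrable (fun x ↦ x) μ) (hm : m ∈ Ioo (-1 : ℝ) 1) :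
    ContDiff ℝ 1 (Gf μ m) :=
  have ⟨_, hC⟩ := exists_abs_deriv_gfun_le hm
  contDiff_one_scaledMean (contDiff_gfun hm) hC hμ

lemma deriv_Gf (hμ : Integrable (fun x ↦ x) μ) (hm : m ∈ Ioo (-1 : ℝ) 1) :
    deriv (Gf μ m) = fun lam ↦ ∫ x, x * deriv (gfun m) (lam * x) ∂μ :=
  have ⟨_, hC⟩ := exists_abs_deriv_gfun_le hm
  deriv_scaledMean (contDiff_gfun hm) hC hμ

lemma strictMono_deriv_Gf (hμ : Integrable (fun x ↦ x) μ) (hμ₀ : ¬ ∀ᵐ x ∂μ, x = 0)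
    (hm : m ∈ Ioo (-1 : ℝ) 1) : StrictMono (deriv (Gf μ m)) := by
  obtain ⟨C, hC⟩ := exists_abs_deriv_gfun_le hm
  rw [deriv_Gf hμ hm]
  exact strictMono_integral_mul_deriv_comp_mul (contDiff_gfun hm) hC hμ hμ₀
    (strictMono_deriv_gfun hm)

lemma tendsto_deriv_Gf_atTop (hμ : Integrable (fun x ↦ x) μ) (hm : m ∈ Ioo (-1 : ℝ) 1) :
    Tendsto (deriv (Gf μ m)) atTop (𝓝 (sigmaBar μ m)) := by
  rw [deriv_Gf hμ hm, ← integral_mul_ite_eq_sigmaBar hμ]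
  exact tendsto_integral_mul_comp_mul_atTop hμ (.of_forall fun _ hx ↦ hx)
    ((contDiff_gfun hm).continuous_deriv le_rfl) (tendsto_deriv_gfun_atBot hm)
    (tendsto_deriv_gfun_atTop hm)

end Mean

lemma measure_singleton_zero_of_assumption1 {μ : Measure ℝ} (hA : Assumption1 μ) : μ {0} = 0 := by
  have := hA.isProb
  obtain ⟨ε, hε, p, -, hball⟩ := hA.smallBall
  refine measure_singleton_eq_zero_of_measureReal_ball_le (p := p) ?_
  filter_upwards [Ioo_mem_nhdsGT hε] with t ht
  simpa [Metric.ball, dist_zero_right, Measure.real] using hball t (Ioo_subset_Ico_self ht)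

lemma integrable_id_of_assumption1 {μ : Measure ℝ} (hA : Assumption1 μ) :
    Integrable (fun x ↦ x) μ :=
  (integrable_norm_iff aestronglyMeasurable_id).1 hA.intAbs

theorem stmt2_general (μ : Measure ℝ) [IsProbabilityMeasure μ] (hμ₀ : μ {0} = 0)
    (hμ : Integrable (fun x ↦ x) μ) (m : ℝ) (hm : m ∈ Ioo (-1 : ℝ) 1) :
    BijOn (Gstar μ m) (Ioo 0 (sigmaBar μ m)) (Ioo 0 (gammaBar μ m)) ∧
    BijOn (deriv (Gf μ m)) (Ioi 0) (Ioo 0 (sigmaBar μ m)) := by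
  have hne : ∀ᵐ x ∂μ, x ≠ 0 := measure_eq_zero_iff_ae_notMem.1 hμ₀
  have hnot : ¬ ∀ᵐ x ∂μ, x = 0 := fun h ↦ (h.and hne).exists.elim fun _ hx ↦ hx.2 hx.1
  have hsmooth := contDiff_one_Gf hμ hm
  have hmono := strictMono_deriv_Gf hμ hnot hm
  have hς := tendsto_deriv_Gf_atTop hμ hm
  have hγ := tendsto_legendreAtDeriv_Gf_atTop hμ hne hm
  have hG₀ : Gf μ m 0 = 0 := by simp [Gf, gfun_zero]
  have hG'₀ : deriv (Gf μ m) 0 = 0 := by simp [deriv_Gf hμ hm, deriv_gfun_zero hm]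
  have hstar := bijOn_legendreTransform hsmooth hmono hς hγ
  have hderiv := bijOn_deriv_Ioi_Ioo hsmooth hmono hς
  rw [hG'₀] at hstar hderiv
  rw [hG₀, neg_zero] at hstar
  exact ⟨hstar, hderiv⟩

/-- for every `c ∈ (0,γ)` there is a unique `ã ∈ (0,ς)` with `G*(ã) = c`,
and a unique `λ̃ ∈ (0,∞)` with `G'(λ̃) = ã`. -/
theorem stmt2 (μ : Measure ℝ) (hA : Assumption1 μ) (m c : ℝ)
    (hm : m ∈ Set.Ioo (-1 : ℝ) 1) (hc : c ∈ Set.Ioo 0 (gammaBar μ m)) :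
    (∃! a : ℝ, a ∈ Set.Ioo 0 (sigmaBar μ m) ∧ Gstar μ m a = c) ∧
    (∀ a ∈ Set.Ioo 0 (sigmaBar μ m), Gstar μ m a = c →
      ∃! lam : ℝ, lam ∈ Set.Ioi (0 : ℝ) ∧ deriv (Gf μ m) lam = a) := by
  have := hA.isProb
  have ⟨hstar, hderiv⟩ := stmt2_general μ (measure_singleton_zero_of_assumption1 hA)
    (integrable_id_of_assumption1 hA) m hm
  exact ⟨existsUnique_mem_of_bijOn hstar hc, fun a ha _ ↦ existsUnique_mem_of_bijOn hderiv ha⟩
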